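/- Let Λ be a noetherian local domain whose residue field has characteristic p > 0, let K be the fraction field of Λ, and let G be a finite p-group. Let C be a chain complex of modules over the group algebra Λ[G], indexed by the integers, such that each term C_i is a finitely generated projective Λ[G]-module and C_i = 0 for all but finitely many i. Then each homology module H_i(C ⊗_Λ K) of the base-changed complex is a finite-dimensional K-vector space, it vanishes for all but finitely many i, and the Euler characteristic Σ_i (-1)^i dim_K H_i(C ⊗_Λ K) is divisible by the order of G. -/

import Mathlib

/-!
Over a local ring of residue characteristic `p`, a finite `p`-group `G` acts trivially on every
simple `Λ[G]`-module: such a module is killed by the maximal ideal of `Λ` (Nakayama), hence by `p`,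
so it has a nonzero `G`-fixed vector, and this vector generates it. Therefore an element of `Λ[G]`
whose augmentation is a unit is itself a unit, and `Λ[G]` is a (noncommutative) local ring. Its
finitely generated projective modules are then free, so `|G|` divides `dim_K (C_i ⊗ K)` for each
`i`. The alternating sum of these dimensions is also that of the dimensions of the homology spaces,
because the rank of each differential `d i j` is counted in degrees `i` and `j` with opposite signs.
-/

universe u

open CategoryTheory ModuleCat HomologicalComplex

universe v w x

section LocalRing

variable {A : Type*} [Ring A]

theorem isDedekindFiniteMonoid_of_isLocalRing [IsLocalRing A] : IsDedekindFiniteMonoid A where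
  mul_eq_one_symm {a b} hab := by
    have b_ne_zero : b ≠ 0 := right_ne_zero_of_mul_eq_one hab
    have sub_mul_ba : (1 - b * a) * b = 0 := by rw [sub_mul, mul_assoc, hab]; simp
    have sub_mul_self : (1 - b * a) * (b * a) = 0 := by rw [← mul_assoc, sub_mul_ba, zero_mul]
    rcases IsLocalRing.isUnit_or_isUnit_of_add_one (add_sub_cancel (b * a) 1) with hu | hu
    · exact (sub_eq_zero.mp (hu.mul_left_eq_zero.mp sub_mul_self)).symm
    · exact absurd (hu.mul_right_eq_zero.mp sub_mul_ba) b_ne_zero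

theorem mem_ringJacobson_of_mem_nonunits [IsLocalRing A] {a : A} (ha : a ∈ nonunits A) :
    a ∈ Ring.jacobson A := by
  have := isDedekindFiniteMonoid_of_isLocalRing (A := A)
  rw [Ring.jacobson_eq_sInf_isMaximal, Ideal.mem_sInf]
  intro M hM
  have hM : M.IsMaximal := hM
  by_contra haM
  obtain ⟨b, m, hm, hbm⟩ := hM.exists_inv haM
  rcases IsLocalRing.isUnit_or_isUnit_of_add_one hbm with hu | hu
  · exact ha (isUnit_of_mul_isUnit_right hu)
  · exact hM.ne_top (Ideal.eq_top_of_isUnit_mem M hm hu)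

theorem mem_nonunits_of_linearCombination_generators_eq_zero {M : Type*} [AddCommGroup M]
    [Module A M] {N : Submodule A M} (hN : N.FG) {c : N.generators →₀ A}
    (hc : Finsupp.linearCombination A ((↑) : N.generators → M) c = 0) (x : N.generators) :
    c x ∈ nonunits A := by
  intro hu
  -- A unit coefficient would make `x` redundant, but `N.generators` has minimal cardinality.
  let others : Set M := N.generators \ {x.1}
  have rest_mem : Finsupp.linearCombination A ((↑) : N.generators → M) (c.erase x) ∈
      Submodule.span A others := by
    refine Submodule.sum_mem _ fun y hy => Submodule.smul_mem _ _ (Submodule.subset_span ?_)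
    exact ⟨y.2, fun h => (Finsupp.mem_support_iff.mp hy) (by rw [Subtype.ext h]; simp)⟩
  have x_mem : x.1 ∈ Submodule.span A others := by
    have : c x • x.1 + Finsupp.linearCombination A (↑) (c.erase x) = 0 := by
      rw [← hc, ← Finsupp.linearCombination_single A (c x) x, ← map_add, Finsupp.single_add_erase]
    rw [← Submodule.smul_mem_iff_of_isUnit _ hu, eq_neg_of_add_eq_zero_left this]
    exact neg_mem rest_mem
  have span_others : Submodule.span A others = N := by
    rw [← Submodule.span_insert_eq_span x_mem, Set.insert_sdiff_singleton,
      Set.insert_eq_of_mem x.2, N.span_generators]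
  have card_lt : others.ncard < N.spanFinrank :=
    hN.generators_ncard ▸ Set.ncard_sdiff_singleton_lt_of_mem x.2 hN.finite_generators
  refine card_lt.not_ge ?_
  rw [← span_others]
  exact Submodule.spanFinrank_span_le_ncard_of_finite hN.finite_generators.sdiff

theorem ker_eq_bot_of_ker_le_jacobson_smul_top {F P : Type*} [AddCommGroup F] [Module A F]
    [Module.Finite A F] [AddCommGroup P] [Module A P] [Module.Projective A P] {f : F →ₗ[A] P}
    (hf : Function.Surjective f) (hker : LinearMap.ker f ≤ Ring.jacobson A • ⊤) :
    LinearMap.ker f = ⊥ := by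
  -- A section `s` of `f` gives an endomorphism `e` of `F` which projects onto `ker f`; applying it
  -- to `ker f ≤ J F` yields `ker f ≤ J (ker f)`, and Nakayama's lemma concludes.
  obtain ⟨s, hs⟩ := Module.projective_lifting_property f LinearMap.id hf
  let e : F →ₗ[A] F := LinearMap.id - s ∘ₗ f
  have range_e : LinearMap.range e = LinearMap.ker f := by
    apply le_antisymm
    · rintro _ ⟨v, rfl⟩
      have : f (s (f v)) = f v := LinearMap.congr_fun hs (f v)
      simp [e, this]
    · intro v hv
      exact ⟨v, by simp [e, LinearMap.mem_ker.mp hv]⟩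
  have map_ker : (LinearMap.ker f).map e = LinearMap.ker f := by
    ext v
    constructor
    · rintro ⟨w, -, rfl⟩
      exact range_e ▸ LinearMap.mem_range_self e w
    · intro hv
      exact ⟨v, hv, by simp [e, LinearMap.mem_ker.mp hv]⟩
  have ker_fg : (LinearMap.ker f).FG := by
    rw [← range_e, LinearMap.range_eq_map]
    exact Module.Finite.fg_top.map e
  apply ker_fg.eq_bot_of_le_jacobson_smul
  calc LinearMap.ker f = (LinearMap.ker f).map e := map_ker.symm
    _ ≤ (Ring.jacobson A • ⊤ : Submodule A F).map e := Submodule.map_mono hker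
    _ = Ring.jacobson A • LinearMap.ker f := by
      rw [Submodule.map_smul'', ← LinearMap.range_eq_map, range_e]

theorem free_of_projective_of_isLocalRing [IsLocalRing A] (P : Type*) [AddCommGroup P]
    [Module A P] [Module.Finite A P] [Module.Projective A P] : Module.Free A P := by
  have fg_top : (⊤ : Submodule A P).FG := Module.Finite.fg_top
  have := fg_top.finite_generators.to_subtype
  let f := Finsupp.linearCombination A ((↑) : (⊤ : Submodule A P).generators → P)
  have f_surjective : Function.Surjective f := by
    rw [← LinearMap.range_eq_top, Finsupp.range_linearCombination, Subtype.range_coe,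
      Submodule.span_generators]
  have ker_le : LinearMap.ker f ≤ Ring.jacobson A • ⊤ := by
    intro c hc
    rw [← c.sum_single]
    refine Submodule.sum_mem _ fun x _ => ?_
    rw [← mul_one (c x), ← smul_eq_mul, ← Finsupp.smul_single]
    exact Submodule.smul_mem_smul (mem_ringJacobson_of_mem_nonunits
      (mem_nonunits_of_linearCombination_generators_eq_zero fg_top hc x)) Submodule.mem_top
  have f_injective : Function.Injective f :=
    LinearMap.ker_eq_bot.mp (ker_eq_bot_of_ker_le_jacobson_smul_top f_surjective ker_le)
  exact Module.Free.of_equiv (LinearEquiv.ofBijective f ⟨f_injective, f_surjective⟩)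

end LocalRing

theorem exists_ne_zero_forall_smul_eq {p : ℕ} [Fact p.Prime] {G : Type*} [Group G] [Finite G]
    (hG : IsPGroup p G) {S : Type*} [AddCommGroup S] [DistribMulAction G S] [Nontrivial S]
    (hp : ∀ s : S, p • s = 0) : ∃ y : S, y ≠ 0 ∧ ∀ g : G, g • y = y := by
  obtain ⟨x, hx⟩ := exists_ne (0 : S)
  -- The additive subgroup `T` generated by an orbit is finitely generated and killed by `p`, hence
  -- finite, so that the fixed points of `G` in it can be counted modulo `p`.
  let T : AddSubgroup S := AddSubgroup.closure (MulAction.orbit G x)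
  have le_comap (g : G) : T ≤ T.comap (DistribSMul.toAddMonoidHom S g) :=
    (AddSubgroup.closure_le _).mpr fun _ hz =>
      AddSubgroup.subset_closure (MulAction.mem_orbit_of_mem_orbit g hz)
  let T' : SubMulAction G S := { carrier := T, smul_mem' := fun g _ ht => le_comap g ht }
  have fg_T : AddGroup.FG T := by
    have : Finite (MulAction.orbit G x) := Set.finite_range _
    exact AddGroup.closure_finite_fg (MulAction.orbit G x)
  have : Finite T := AddCommGroup.finite_of_fg_isAddTorsion _ fun t =>
    isOfFinAddOrder_iff_nsmul_eq_zero.mpr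
      ⟨p, (Fact.out : p.Prime).pos, Subtype.ext (hp t)⟩
  have dvd_card : p ∣ Nat.card T := by
    let x' : T := ⟨x, AddSubgroup.subset_closure (MulAction.mem_orbit_self x)⟩
    have : addOrderOf x' = p :=
      addOrderOf_eq_prime (Subtype.ext (hp x)) fun h => hx (congrArg Subtype.val h)
    exact this ▸ addOrderOf_dvd_natCard x'
  have : Finite T' := ‹Finite T›
  obtain ⟨y, y_fixed, zero_ne_y⟩ :=
    hG.exists_fixed_point_of_prime_dvd_card_of_fixed_point T' dvd_card
      (a := ⟨0, T.zero_mem⟩) fun g => Subtype.ext (smul_zero g)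
  exact ⟨y, fun h => zero_ne_y (Subtype.ext h.symm), fun g => congrArg Subtype.val (y_fixed g)⟩

theorem smul_eq_zero_of_mem_maximalIdeal {Λ A S : Type*} [CommRing Λ] [IsLocalRing Λ] [Ring A]
    [Algebra Λ A] [Module.Finite Λ A] [AddCommGroup S] [Module Λ S] [Module A S]
    [IsScalarTower Λ A S] [IsSimpleModule A S] {r : Λ} (hr : r ∈ IsLocalRing.maximalIdeal Λ)
    (s : S) : r • s = 0 := by
  have := IsScalarTower.to_smulCommClass (R := Λ) (A := A) (M := S)
  have := IsSimpleModule.nontrivial A S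
  have := Module.Finite.trans (R := Λ) A S
  rcases LinearMap.bijective_or_eq_zero (r • LinearMap.id : S →ₗ[A] S) with hbij | hzero
  · refine absurd ?_ (bot_ne_top (α := Submodule Λ S)).symm
    refine Submodule.eq_bot_of_le_smul_of_le_jacobson_bot (IsLocalRing.maximalIdeal Λ) ⊤
      Module.Finite.fg_top (fun s _ => ?_) (IsLocalRing.maximalIdeal_le_jacobson _)
    obtain ⟨t, rfl⟩ := hbij.surjective s
    exact Submodule.smul_mem_smul hr Submodule.mem_top
  · exact LinearMap.congr_fun hzero s

section Augmentation

/-- The augmentation `∑ r_g g ↦ ∑ r_g` of a monoid algebra. -/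
noncomputable def augmentation (R G : Type*) [CommSemiring R] [Monoid G] :
    MonoidAlgebra R G →ₐ[R] R :=
  MonoidAlgebra.lift R R G 1

theorem smul_eq_augmentation_smul_of_forall_smul_eq {R G S : Type*} [CommSemiring R] [Monoid G]
    [AddCommMonoid S] [Module R S] [Module (MonoidAlgebra R G) S]
    [IsScalarTower R (MonoidAlgebra R G) S] {y : S}
    (hy : ∀ g : G, MonoidAlgebra.of R G g • y = y) (a : MonoidAlgebra R G) :
    a • y = augmentation R G a • y := by
  induction a using MonoidAlgebra.induction_on with
  | of g => rw [hy, augmentation, MonoidAlgebra.lift_of, MonoidHom.one_apply, one_smul]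
  | add a b ha hb => rw [add_smul, ha, hb, map_add, add_smul]
  | smul r a ha => rw [smul_assoc, ha, map_smul, smul_assoc]

variable {Λ : Type*} [CommRing Λ] [IsLocalRing Λ] {p : ℕ} [Fact p.Prime]
  [CharP (IsLocalRing.ResidueField Λ) p] {G : Type*} [Group G] [Finite G]

theorem smul_eq_augmentation_smul_of_isSimpleModule (hG : IsPGroup p G) {S : Type*}
    [AddCommGroup S] [Module Λ S] [Module (MonoidAlgebra Λ G) S]
    [IsScalarTower Λ (MonoidAlgebra Λ G) S] [IsSimpleModule (MonoidAlgebra Λ G) S]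
    (a : MonoidAlgebra Λ G) (s : S) : a • s = augmentation Λ G a • s := by
  let : DistribMulAction G S := DistribMulAction.compHom S (MonoidAlgebra.of Λ G)
  have := IsSimpleModule.nontrivial (MonoidAlgebra Λ G) S
  have p_mem : (p : Λ) ∈ IsLocalRing.maximalIdeal Λ := by
    rw [← IsLocalRing.residue_eq_zero_iff, map_natCast, CharP.cast_eq_zero]
  have p_smul (s : S) : p • s = 0 := by
    rw [← Nat.cast_smul_eq_nsmul Λ]
    exact smul_eq_zero_of_mem_maximalIdeal (A := MonoidAlgebra Λ G) p_mem s
  obtain ⟨y, y_ne_zero, y_fixed⟩ := exists_ne_zero_forall_smul_eq hG p_smul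
  have smul_y := smul_eq_augmentation_smul_of_forall_smul_eq y_fixed
  obtain ⟨b, rfl⟩ : ∃ b : MonoidAlgebra Λ G, b • y = s :=
    IsSimpleModule.toSpanSingleton_surjective (MonoidAlgebra Λ G) y_ne_zero s
  rw [← mul_smul, smul_y, smul_y b, map_mul, mul_smul]

theorem exists_mul_eq_one_of_isUnit_augmentation (hG : IsPGroup p G) {a : MonoidAlgebra Λ G}
    (ha : IsUnit (augmentation Λ G a)) : ∃ b, b * a = 1 := by
  rw [← Ideal.mem_span_singleton', ← Ideal.eq_top_iff_one]
  by_contra span_ne_top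
  obtain ⟨M, hM, span_le⟩ := Ideal.exists_le_maximal _ span_ne_top
  have : IsSimpleModule (MonoidAlgebra Λ G) (MonoidAlgebra Λ G ⧸ M) :=
    isSimpleModule_iff_isCoatom.mpr hM.out
  have a_mem : a ∈ M := span_le (Ideal.mem_span_singleton_self a)
  have mk_one_eq_zero : (Submodule.Quotient.mk 1 : MonoidAlgebra Λ G ⧸ M) = 0 := by
    rw [← ha.smul_eq_zero, ← smul_eq_augmentation_smul_of_isSimpleModule hG,
      ← Submodule.Quotient.mk_smul, smul_eq_mul, mul_one]
    exact (Submodule.Quotient.mk_eq_zero M).mpr a_mem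
  have one_mem : 1 ∈ M := (Submodule.Quotient.mk_eq_zero M).mp mk_one_eq_zero
  exact hM.ne_top ((Ideal.eq_top_iff_one M).mpr one_mem)

theorem isLocalHom_augmentation (hG : IsPGroup p G) : IsLocalHom (augmentation Λ G) where
  map_nonunit a ha := by
    obtain ⟨b, hba⟩ := exists_mul_eq_one_of_isUnit_augmentation hG ha
    have hb : IsUnit (augmentation Λ G b) :=
      .of_mul_eq_one (augmentation Λ G a) (by rw [← map_mul, hba, map_one])
    obtain ⟨c, hcb⟩ := exists_mul_eq_one_of_isUnit_augmentation hG hb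
    have hca : c = a := left_inv_eq_right_inv hcb hba
    exact ⟨⟨a, b, hca ▸ hcb, hba⟩, rfl⟩

theorem isLocalRing_monoidAlgebra (hG : IsPGroup p G) : IsLocalRing (MonoidAlgebra Λ G) :=
  have := isLocalHom_augmentation (Λ := Λ) hG
  (augmentation Λ G : MonoidAlgebra Λ G →+* Λ).domain_isLocalRing

end Augmentation

section EulerCharacteristic

variable {K : Type*} [DivisionRing K]

theorem finite_homology_of_finite_X₂ (S : ShortComplex (ModuleCat K)) [Module.Finite K S.X₂] :
    Module.Finite K S.homology :=
  let e : S.homology ≃ₗ[K] LinearMap.ker S.g.hom ⧸ LinearMap.range S.moduleCatToCycles :=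
    S.moduleCatHomologyIso.toLinearEquiv
  Module.Finite.equiv e.symm

theorem finrank_homology_add_finrank_range_add_finrank_range (S : ShortComplex (ModuleCat K))
    [Module.Finite K S.X₂] :
    Module.finrank K S.homology + Module.finrank K (LinearMap.range S.f.hom) +
      Module.finrank K (LinearMap.range S.g.hom) = Module.finrank K S.X₂ := by
  have finrank_boundaries : Module.finrank K (LinearMap.range S.moduleCatToCycles) =
      Module.finrank K (LinearMap.range S.f.hom) := by
    rw [← Submodule.finrank_map_subtype_eq, ← LinearMap.range_comp]
    rfl
  have finrank_homology : Module.finrank K S.homology =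
      Module.finrank K (LinearMap.ker S.g.hom ⧸ LinearMap.range S.moduleCatToCycles) :=
    S.moduleCatHomologyIso.toLinearEquiv.finrank_eq
  rw [finrank_homology, ← finrank_boundaries,
    Submodule.finrank_quotient_add_finrank, add_comm, LinearMap.finrank_range_add_finrank_ker]

variable {ι : Type*} {c : ComplexShape ι} (D : HomologicalComplex (ModuleCat K) c)

theorem finite_homology (i : ι) [h : Module.Finite K (D.X i)] : Module.Finite K (D.homology i) :=
  have : Module.Finite K (D.sc i).X₂ := h
  finite_homology_of_finite_X₂ (D.sc i)

theorem finrank_homology_add_finrank_range_d_add_finrank_range_d (i : ι)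
    [h : Module.Finite K (D.X i)] :
    Module.finrank K (D.homology i) +
      Module.finrank K (LinearMap.range (D.d (c.prev i) i).hom) +
      Module.finrank K (LinearMap.range (D.d i (c.next i)).hom) = Module.finrank K (D.X i) :=
  have : Module.Finite K (D.sc i).X₂ := h
  finrank_homology_add_finrank_range_add_finrank_range (D.sc i)

theorem finrank_range_d_eq_zero_of_not_rel {i j : ι} (h : ¬ c.Rel i j) :
    Module.finrank K (LinearMap.range (D.d i j).hom) = 0 := by
  rw [D.shape i j h, hom_zero, LinearMap.range_zero, finrank_bot]

theorem finrank_homology_add_sum_finrank_range_d [∀ i, Module.Finite K (D.X i)] {s : Finset ι}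
    (hs : GradedObject.finrankSupport D.X ⊆ s) (i : ι) :
    Module.finrank K (D.homology i) + ∑ j ∈ s, Module.finrank K (LinearMap.range (D.d j i).hom) +
      ∑ j ∈ s, Module.finrank K (LinearMap.range (D.d i j).hom) = Module.finrank K (D.X i) := by
  have X_eq_zero (j : ι) (hj : j ∉ s) : Module.finrank K (D.X j) = 0 :=
    (GradedObject.finrankSupport_subset_iff _ _).mp hs j hj
  have sum_to : ∑ j ∈ s, Module.finrank K (LinearMap.range (D.d j i).hom) =
      Module.finrank K (LinearMap.range (D.d (c.prev i) i).hom) := by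
    refine Finset.sum_eq_single _ (fun j _ hj => ?_) fun hprev => ?_
    · exact finrank_range_d_eq_zero_of_not_rel D fun h => hj (c.prev_eq' h).symm
    · exact Nat.eq_zero_of_le_zero (X_eq_zero _ hprev ▸ LinearMap.finrank_range_le _)
  have sum_from : ∑ j ∈ s, Module.finrank K (LinearMap.range (D.d i j).hom) =
      Module.finrank K (LinearMap.range (D.d i (c.next i)).hom) := by
    refine Finset.sum_eq_single _ (fun j _ hj => ?_) fun hnext => ?_
    · exact finrank_range_d_eq_zero_of_not_rel D fun h => hj (c.next_eq' h).symm
    · exact Nat.eq_zero_of_le_zero (X_eq_zero _ hnext ▸ Submodule.finrank_le _)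
  rw [sum_to, sum_from, finrank_homology_add_finrank_range_d_add_finrank_range_d]

theorem finrankSupport_homology_subset [∀ i, Module.Finite K (D.X i)] :
    GradedObject.finrankSupport (fun i => D.homology i) ⊆ GradedObject.finrankSupport D.X := by
  intro i hi finrank_X
  have := finrank_homology_add_finrank_range_d_add_finrank_range_d D i
  have finrank_homology_le : Module.finrank K (D.homology i) ≤ Module.finrank K (D.X i) := by omega
  exact hi (Nat.eq_zero_of_le_zero (finrank_homology_le.trans_eq finrank_X))

theorem homologyEulerChar_eq_eulerChar [c.EulerCharSigns] [∀ i, Module.Finite K (D.X i)]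
    (hfin : (GradedObject.finrankSupport D.X).Finite) : D.homologyEulerChar = D.eulerChar := by
  have support_subset : GradedObject.finrankSupport D.X ⊆ hfin.toFinset := by simp
  set s := hfin.toFinset
  let rank (i j : ι) : ℤ := Module.finrank K (LinearMap.range (D.d i j).hom)
  have sign_cancel (i j : ι) : (c.χ i + c.χ j : ℤ) * rank i j = 0 := by
    by_cases h : c.Rel i j
    · simp [c.χ_next h]
    · simp [rank, finrank_range_d_eq_zero_of_not_rel D h]
  have sum_cancel :
      ∑ i ∈ s, ∑ j ∈ s, c.χ i * rank j i + ∑ i ∈ s, ∑ j ∈ s, c.χ i * rank i j = 0 := by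
    rw [Finset.sum_comm, add_comm]
    simp only [← Finset.sum_add_distrib, ← add_mul, sign_cancel, Finset.sum_const_zero]
  have finrank_X (i : ι) : (Module.finrank K (D.X i) : ℤ) =
      Module.finrank K (D.homology i) + ∑ j ∈ s, rank j i + ∑ j ∈ s, rank i j := by
    simp only [rank]
    exact_mod_cast (finrank_homology_add_sum_finrank_range_d D support_subset i).symm
  rw [D.homologyEulerChar_eq_sum_finSet_of_finrankSupport_subset s
      ((finrankSupport_homology_subset D).trans support_subset),
    D.eulerChar_eq_sum_finSet_of_finrankSupport_subset s support_subset]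
  symm
  calc ∑ i ∈ s, (c.χ i : ℤ) * Module.finrank K (D.X i)
      = ∑ i ∈ s, (c.χ i : ℤ) * Module.finrank K (D.homology i) +
          (∑ i ∈ s, ∑ j ∈ s, c.χ i * rank j i + ∑ i ∈ s, ∑ j ∈ s, c.χ i * rank i j) := by
        simp only [finrank_X, mul_add, Finset.mul_sum, Finset.sum_add_distrib, add_assoc]
    _ = ∑ i ∈ s, (c.χ i : ℤ) * Module.finrank K (D.homology i) := by
        rw [sum_cancel, add_zero]

theorem dvd_eulerChar_of_forall_dvd_finrank {R : Type*} [Ring R] [c.EulerCharSigns]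
    {D : HomologicalComplex (ModuleCat R) c} {n : ℕ} (h : ∀ i, n ∣ Module.finrank R (D.X i)) :
    (n : ℤ) ∣ D.eulerChar :=
  finsum_induction ((n : ℤ) ∣ ·) (dvd_zero _) (fun _ _ => dvd_add) fun i =>
    (Int.natCast_dvd_natCast.mpr (h i)).mul_left _

end EulerCharacteristic

section BaseChange

theorem finrank_dvd_finrank_of_free (R S M : Type*) [Semiring R] [StrongRankCondition R]
    [Semiring S] [Module R S] [Module.Free R S] [AddCommMonoid M]
    [Module R M] [Module S M] [IsScalarTower R S M] [Module.Free S M] :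
    Module.finrank R S ∣ Module.finrank R M := by
  rw [Module.finrank_eq_nat_card_basis
      ((Module.Free.chooseBasis R S).smulTower (Module.Free.chooseBasis S M)),
    Nat.card_prod, ← Module.finrank_eq_nat_card_basis (Module.Free.chooseBasis R S)]
  exact dvd_mul_right _ _

variable {R : Type u} {S : Type v} [CommRing R] [CommRing S] (f : R →+* S)

theorem finite_extendScalars (M : ModuleCat.{w} R) [Module.Finite R M] :
    Module.Finite S ((extendScalars f).obj M) :=
  let := f.toAlgebra
  inferInstanceAs (Module.Finite S (TensorProduct R S M))

theorem finrank_extendScalars [Nontrivial S] (M : ModuleCat.{w} R) [Module.Free R M] :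
    Module.finrank S ((extendScalars f).obj M) = Module.finrank R M :=
  have := f.domain_nontrivial
  let := f.toAlgebra
  Module.finrank_baseChange (R := S) (S := R) (M' := M)

section

variable {A : Type*} [Ring A] [Algebra R A] (P : ModuleCat.{w} A)

noncomputable local instance : Module A ((restrictScalars (algebraMap R A)).obj P) :=
  inferInstanceAs (Module A P)

local instance : IsScalarTower R A ((restrictScalars (algebraMap R A)).obj P) :=
  .of_algebraMap_smul fun _ _ => rfl

theorem finite_restrictScalars [Module.Finite R A] [hP : Module.Finite A P] :
    Module.Finite R ((restrictScalars (algebraMap R A)).obj P) :=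
  have : Module.Finite A ((restrictScalars (algebraMap R A)).obj P) := hP
  .trans A _

theorem finrank_dvd_finrank_extendScalars_restrictScalars [Nontrivial S] [Module.Free R A]
    [hP : Module.Free A P] :
    Module.finrank R A ∣
      Module.finrank S ((restrictScalars (algebraMap R A) ⋙ extendScalars f).obj P) := by
  have := f.domain_nontrivial
  have : Module.Free A ((restrictScalars (algebraMap R A)).obj P) := hP
  have : Module.Free R ((restrictScalars (algebraMap R A)).obj P) := .trans (S := A)
  rw [Functor.comp_obj, finrank_extendScalars]
  exact finrank_dvd_finrank_of_free R A _

end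

end BaseChange

theorem euler_char_dvd_general {Λ : Type u} [CommRing Λ] [IsLocalRing Λ] {K : Type v} [Field K]
    (f : Λ →+* K) {p : ℕ} [Fact p.Prime] [CharP (IsLocalRing.ResidueField Λ) p]
    {G : Type w} [Group G] [Finite G] (hG : IsPGroup p G)
    {ι : Type*} {c : ComplexShape ι} [c.EulerCharSigns]
    (C : HomologicalComplex (ModuleCat.{max v x} (MonoidAlgebra Λ G)) c)
    (hfin : ∀ i, Module.Finite (MonoidAlgebra Λ G) (C.X i))
    (hproj : ∀ i, Module.Projective (MonoidAlgebra Λ G) (C.X i))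
    (hbdd : {i | ¬ Subsingleton (C.X i)}.Finite)
    (D : HomologicalComplex (ModuleCat.{max v x} K) c)
    (hD : D = ((restrictScalars (algebraMap Λ (MonoidAlgebra Λ G)) ⋙
      extendScalars.{u, v, max v x} f).mapHomologicalComplex c).obj C) :
    (∀ i, FiniteDimensional K (D.homology i)) ∧ {i | ¬ Subsingleton (D.homology i)}.Finite ∧
      (Nat.card G : ℤ) ∣ D.homologyEulerChar := by
  subst hD
  set F := restrictScalars (algebraMap Λ (MonoidAlgebra Λ G)) ⋙ extendScalars.{u, v, max v x} f
  set D := (F.mapHomologicalComplex c).obj C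
  have := isLocalRing_monoidAlgebra (Λ := Λ) hG
  have finite_X (i : ι) : Module.Finite K (D.X i) :=
    have := finite_restrictScalars (R := Λ) (C.X i)
    finite_extendScalars f _
  have card_dvd (i : ι) : Nat.card G ∣ Module.finrank K (D.X i) := by
    have := free_of_projective_of_isLocalRing (A := MonoidAlgebra Λ G) (C.X i)
    rw [← Module.finrank_eq_nat_card_basis (MonoidAlgebra.basis G Λ)]
    exact finrank_dvd_finrank_extendScalars_restrictScalars f (C.X i)
  have finite_support : (GradedObject.finrankSupport D.X).Finite := by
    refine hbdd.subset fun i hi hsub => hi ?_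
    have := subsingleton_of_isZero (F.map_isZero (isZero_of_subsingleton (C.X i)))
    exact Module.finrank_zero_of_subsingleton (M := F.obj (C.X i))
  have finite_H (i : ι) : Module.Finite K (D.homology i) := finite_homology D i
  refine ⟨finite_H, ?_, ?_⟩
  · refine finite_support.subset fun i hi => finrankSupport_homology_subset D fun h => hi ?_
    exact Module.finrank_zero_iff.mp h
  · rw [homologyEulerChar_eq_eulerChar D finite_support]
    exact dvd_eulerChar_of_forall_dvd_finrank card_dvd

/-- Let `Λ` be a noetherian local domain whose residue field has characteristic
`p > 0`, let `K` be its fraction field, and let `G` be a finite `p`-group.  Let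
`C` be a chain complex of `Λ[G]`-modules indexed by `ℤ` whose terms are finitely
generated projective `Λ[G]`-modules, all but finitely many of which vanish.
Then each homology module of the base-changed complex `C ⊗_Λ K` is a
finite-dimensional `K`-vector space, all but finitely many of them vanish, and
the Euler characteristic `∑ i, (-1)^i dim_K H_i(C ⊗_Λ K)` is divisible by the
order of `G`. -/
theorem euler_char_dvd (Λ : Type u) [CommRing Λ] [IsDomain Λ] [IsLocalRing Λ]
    [IsNoetherianRing Λ]
    (K : Type u) [Field K] [Algebra Λ K] [IsFractionRing Λ K]
    (p : ℕ) [Fact p.Prime] [CharP (IsLocalRing.ResidueField Λ) p]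
    (G : Type u) [Group G] [Finite G] (hG : IsPGroup p G)
    (C : HomologicalComplex (ModuleCat.{u} (MonoidAlgebra Λ G)) (ComplexShape.down ℤ))
    (hfin : ∀ i : ℤ, Module.Finite (MonoidAlgebra Λ G) (C.X i))
    (hproj : ∀ i : ℤ, Module.Projective (MonoidAlgebra Λ G) (C.X i))
    (hbdd : {i : ℤ | ¬ Subsingleton (C.X i)}.Finite) :
    ∀ D : HomologicalComplex (ModuleCat.{u} K) (ComplexShape.down ℤ),
      D = ((ModuleCat.restrictScalars (algebraMap Λ (MonoidAlgebra Λ G)) ⋙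
            ModuleCat.extendScalars (algebraMap Λ K)).mapHomologicalComplex
              (ComplexShape.down ℤ)).obj C →
      (∀ i : ℤ, FiniteDimensional K (D.homology i)) ∧
      {i : ℤ | ¬ Subsingleton (D.homology i)}.Finite ∧
      (Nat.card G : ℤ) ∣
        ∑ᶠ i : ℤ, (Int.negOnePow i : ℤ) * (Module.finrank K (D.homology i) : ℤ) := by
  intro D hD
  exact euler_char_dvd_general (algebraMap Λ K) hG C hfin hproj hbdd D hD
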